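/- arXiv:2501.12261 — 7 statements merged into one kernel-verified Lean document; each statement's English description precedes it below -/
import Mathlib

section
/- Let V be a finite set, let ℓ ≥ 1 be an integer, and let L^0, …, L^ℓ be pairwise disjoint subsets of V whose union is V. Let δ, ε ∈ (0,1), let k ≥ 1 be an integer, and let S_1, …, S_k be subsets of V. If ℓ + 1 ≥ 2k/δ + 2/ε, then there exists an index p ∈ {0, …, ℓ} such that simultaneously: (i) |S_h ∩ L^p| ≤ (δ/2)·|S_h| for every h ∈ {1,…,k}, and (ii) ∑_{i≠j} |(S_i ∩ L^p) Δ (S_j ∩ L^p)| ≤ (ε/2)·∑_{i≠j} |S_i Δ S_j|, where both sums range over ordered pairs i ≠ j in {1,…,k}. -/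
open Finset

/-!
Intersecting with the parts `L p` can only split cardinalities: over all `p`, the numbers
`|S h ∩ L p|` sum to at most `|S h|`, and the diversities of the traces on `L p` sum to at most the
diversity of `S`. Divide each of these `k + 1` quantities by the bound it has to satisfy. The
total over `p` of all the ratios is then at most `2k/δ + 2/ε`, which is at most the number of
parts, so at some `p` the ratios add up to at most `1`, and in particular each of them is at most
`1`.
-/

theorem exists_forall_le_mul_sum_of_sum_inv_le_card {K ι κ : Type*} [Field K] [LinearOrder K]
    [IsStrictOrderedRing K] [Fintype ι] [Nonempty ι] [Fintype κ] {f : κ → ι → K} {c : κ → K}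
    (hf : ∀ j i, 0 ≤ f j i) (hc : ∀ j, 0 < c j) (hcard : ∑ j, (c j)⁻¹ ≤ Fintype.card ι) :
    ∃ i, ∀ j, f j i ≤ c j * ∑ i', f j i' := by
  let ratio (j : κ) (i : ι) : K := f j i / (c j * ∑ i', f j i')
  have total_nonneg (j : κ) : 0 ≤ ∑ i, f j i := sum_nonneg fun i _ ↦ hf j i
  have ratio_nonneg (j : κ) (i : ι) : 0 ≤ ratio j i :=
    div_nonneg (hf j i) (mul_nonneg (hc j).le (total_nonneg j))
  have sum_ratio_le (j : κ) : ∑ i, ratio j i ≤ (c j)⁻¹ := calc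
    ∑ i, ratio j i = (∑ i, f j i) / (∑ i, f j i) * (c j)⁻¹ := by
      rw [← sum_div, mul_comm (c j), div_mul_eq_div_div, div_eq_mul_inv _ (c j)]
    _ ≤ (c j)⁻¹ := mul_le_of_le_one_left (inv_nonneg.2 (hc j).le) (div_self_le_one _)
  have sum_sum_ratio_le : ∑ i, ∑ j, ratio j i ≤ ∑ _i : ι, 1 := calc
    ∑ i, ∑ j, ratio j i = ∑ j, ∑ i, ratio j i := sum_comm
    _ ≤ ∑ j, (c j)⁻¹ := sum_le_sum fun j _ ↦ sum_ratio_le j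
    _ ≤ ∑ _i : ι, 1 := by simpa using hcard
  obtain ⟨i, -, hi⟩ := exists_le_of_sum_le univ_nonempty sum_sum_ratio_le
  refine ⟨i, fun j ↦ ?_⟩
  have ratio_le_one : ratio j i ≤ 1 :=
    (single_le_sum (fun j _ ↦ ratio_nonneg j i) (mem_univ j)).trans hi
  -- If the `j`-th total vanishes, `ratio j i` is the junk value `x / 0`, but then `f j i = 0`.
  rcases (total_nonneg j).eq_or_lt with total_zero | total_pos
  · rw [← total_zero, mul_zero, total_zero]
    exact single_le_sum (fun i _ ↦ hf j i) (mem_univ i)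
  · exact (div_le_one (mul_pos (hc j) total_pos)).1 ratio_le_one

section DisjointParts

variable {V ι κ : Type*} [DecidableEq V]

theorem sum_card_inter_le_card {s : Finset ι} {L : ι → Finset V}
    (hL : (s : Set ι).PairwiseDisjoint L) (A : Finset V) : ∑ p ∈ s, #(A ∩ L p) ≤ #A := calc
  ∑ p ∈ s, #(A ∩ L p) = #(s.biUnion fun p ↦ A ∩ L p) :=
    (card_biUnion (hL.mono fun _ ↦ inter_subset_right)).symm
  _ ≤ #A := card_le_card (biUnion_subset.2 fun _ _ ↦ inter_subset_left)

variable [Fintype κ]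

/-- The diversity of a finite family of finite sets: the sum of the sizes of the symmetric
differences of its members. Pairs are ordered, so each unordered pair of distinct indices counts
twice. -/
def diversity (S : κ → Finset V) : ℕ :=
  ∑ ij ∈ (univ : Finset κ).offDiag, #(symmDiff (S ij.1) (S ij.2))

theorem sum_diversity_inter_le_diversity {s : Finset ι} {L : ι → Finset V}
    (hL : (s : Set ι).PairwiseDisjoint L) (S : κ → Finset V) :
    ∑ p ∈ s, diversity (fun h ↦ S h ∩ L p) ≤ diversity S := calc
  ∑ p ∈ s, diversity (fun h ↦ S h ∩ L p)
      = ∑ ij ∈ (univ : Finset κ).offDiag, ∑ p ∈ s, #(symmDiff (S ij.1) (S ij.2) ∩ L p) := by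
    simp only [diversity, ← inf_eq_inter, inf_symmDiff_distrib_right]
    exact sum_comm
  _ ≤ diversity S := sum_le_sum fun _ _ ↦ sum_card_inter_le_card hL _

theorem marginal_strata_general [Fintype ι] {L : ι → Finset V}
    (hL : Pairwise (Function.onFun Disjoint L)) {δ ε : ℝ} (hδ : 0 < δ) (hε : 0 < ε)
    (S : κ → Finset V) (hbound : 2 * Fintype.card κ / δ + 2 / ε ≤ Fintype.card ι) :
    ∃ p, (∀ h, (#(S h ∩ L p) : ℝ) ≤ δ / 2 * #(S h)) ∧
      (diversity (fun h ↦ S h ∩ L p) : ℝ) ≤ ε / 2 * diversity S := by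
  have hL' : ((univ : Finset ι) : Set ι).PairwiseDisjoint L := hL.set_pairwise _
  have card_pos : (0 : ℝ) < Fintype.card ι := lt_of_lt_of_le (by positivity) hbound
  have : Nonempty ι := Fintype.card_pos_iff.1 (Nat.cast_pos.1 card_pos)
  let size : Option κ → ι → ℝ := fun j p ↦
    j.elim (diversity fun h ↦ S h ∩ L p : ℝ) fun h ↦ #(S h ∩ L p)
  let fraction : Option κ → ℝ := fun j ↦ j.elim (ε / 2) fun _ ↦ δ / 2
  have size_nonneg : ∀ j p, 0 ≤ size j p :=
    Option.forall.2 ⟨fun _ ↦ Nat.cast_nonneg _, fun _ _ ↦ Nat.cast_nonneg _⟩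
  have fraction_pos : ∀ j, 0 < fraction j :=
    Option.forall.2 ⟨half_pos hε, fun _ ↦ half_pos hδ⟩
  have sum_inv_fraction : ∑ j, (fraction j)⁻¹ ≤ Fintype.card ι := calc
    ∑ j, (fraction j)⁻¹ = 2 * Fintype.card κ / δ + 2 / ε := by
      simp only [fraction, Fintype.sum_option, Option.elim_none, Option.elim_some, inv_div,
        sum_const, card_univ, nsmul_eq_mul]
      ring
    _ ≤ Fintype.card ι := hbound
  obtain ⟨p, hp⟩ :=
    exists_forall_le_mul_sum_of_sum_inv_le_card size_nonneg fraction_pos sum_inv_fraction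
  have sum_card_le (h : κ) : ∑ p, (#(S h ∩ L p) : ℝ) ≤ #(S h) :=
    mod_cast sum_card_inter_le_card hL' (S h)
  have sum_diversity_le : ∑ p, (diversity fun h ↦ S h ∩ L p : ℝ) ≤ diversity S :=
    mod_cast sum_diversity_inter_le_diversity hL' S
  refine ⟨p, fun h ↦ (hp (some h)).trans ?_, (hp none).trans ?_⟩
  · exact mul_le_mul_of_nonneg_left (sum_card_le h) (half_pos hδ).le
  · exact mul_le_mul_of_nonneg_left sum_diversity_le (half_pos hε).le

end DisjointParts

/-- Marginal strata lemma (existence of a marginal stratum):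
given a partition `L 0, …, L ℓ` of a finite set `V` and subsets `S 1, …, S k`,
if `ℓ + 1 ≥ 2k/δ + 2/ε` then some part `L p` intersects every `S h` in at most a `δ/2`
fraction of its size, and contributes at most an `ε/2` fraction of the total pairwise
diversity (sum of symmetric differences over ordered pairs `i ≠ j`). -/
theorem marginal_strata {V : Type*} [Fintype V] [DecidableEq V]
    (ℓ : ℕ) (hℓ : 1 ≤ ℓ)
    (L : Fin (ℓ + 1) → Finset V)
    (hdisj : ∀ p q : Fin (ℓ + 1), p ≠ q → Disjoint (L p) (L q))
    (hcover : Finset.univ.biUnion L = (Finset.univ : Finset V))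
    (δ ε : ℝ) (hδ0 : 0 < δ) (hδ1 : δ < 1) (hε0 : 0 < ε) (hε1 : ε < 1)
    (k : ℕ) (hk : 1 ≤ k)
    (S : Fin k → Finset V)
    (hbound : 2 * k / δ + 2 / ε ≤ ((ℓ : ℝ) + 1)) :
    ∃ p : Fin (ℓ + 1),
      (∀ h : Fin k, ((S h ∩ L p).card : ℝ) ≤ (δ / 2) * (S h).card) ∧
      (∑ ij ∈ (Finset.univ : Finset (Fin k)).offDiag,
          ((symmDiff (S ij.1 ∩ L p) (S ij.2 ∩ L p)).card : ℝ))
        ≤ (ε / 2) * ∑ ij ∈ (Finset.univ : Finset (Fin k)).offDiag,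
            ((symmDiff (S ij.1) (S ij.2)).card : ℝ) := by
  simpa [diversity] using marginal_strata_general (fun p q ↦ hdisj p q) hδ0 hε0 S (by simpa)
end

section
/- Let V be a finite set, let ℓ ≥ 1 be an integer, and let L^0, …, L^ℓ be pairwise disjoint subsets of V whose union is V. Let δ, ε ∈ (0,1), let k ≥ 1 be an integer, and let S_1, …, S_k be subsets of V. If ℓ + 1 ≥ 2k² + 2k/δ + 2/ε, then there exists an index p ∈ {0, …, ℓ} such that simultaneously: (i) |S_h ∩ L^p| ≤ (δ/2)·|S_h| for every h ∈ {1,…,k}; (ii) ∑_{i≠j} |(S_i ∩ L^p) Δ (S_j ∩ L^p)| ≤ (ε/2)·∑_{i≠j} |S_i Δ S_j| (sums over ordered pairs i ≠ j); and (iii) |(S_i ∩ L^p) Δ (S_j ∩ L^p)| ≤ (1/2)·|S_i Δ S_j| for every pair i ≠ j. -/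
open Finset

/-!
Intersecting with `L p` commutes with symmetric difference, so each requirement on the index
`p` bounds a nonnegative quantity, whose total over all `p` is at most `T`, by a fraction `c` of
`T`. By Markov's inequality fewer than `1 / c` indices violate one such requirement. There are `k`
requirements with `c = δ / 2`, one with `c = ε / 2` and `k ^ 2` with `c = 1 / 2`, so
`2 * k ^ 2 + 2 * k / δ + 2 / ε` indices cannot all be violating.
-/

section UnionBound

variable {ι α 𝕜 : Type*} [Field 𝕜] [LinearOrder 𝕜] [IsStrictOrderedRing 𝕜]

theorem card_filter_mul_lt_lt_inv {s : Finset α} {f : α → 𝕜} {T c : 𝕜}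
    (hf : ∀ a ∈ s, 0 ≤ f a) (hT : ∑ a ∈ s, f a ≤ T) (hc : 0 < c) :
    (#{a ∈ s | c * T < f a} : 𝕜) < c⁻¹ := by
  set bad := {a ∈ s | c * T < f a}
  obtain hbad | hbad := bad.eq_empty_or_nonempty
  · simpa [hbad] using hc
  have hT_nonneg : 0 ≤ T := (sum_nonneg hf).trans hT
  have hlt : #bad * c * T < 1 * T := calc
    #bad * c * T = ∑ _a ∈ bad, c * T := by rw [sum_const, nsmul_eq_mul, mul_assoc]
    _ < ∑ a ∈ bad, f a := sum_lt_sum_of_nonempty hbad fun a ha ↦ (mem_filter.mp ha).2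
    _ ≤ ∑ a ∈ s, f a := sum_le_sum_of_subset_of_nonneg (filter_subset _ _) fun a ha _ ↦ hf a ha
    _ ≤ 1 * T := by rwa [one_mul]
  rw [← one_div, lt_div_iff₀ hc]
  exact lt_of_mul_lt_mul_right hlt hT_nonneg

theorem exists_mem_forall_le_mul_of_sum_inv_le_card {s : Finset α} {t : Finset ι}
    {f : ι → α → 𝕜} {T c : ι → 𝕜} (ht : t.Nonempty) (hf : ∀ i ∈ t, ∀ a ∈ s, 0 ≤ f i a)
    (hT : ∀ i ∈ t, ∑ a ∈ s, f i a ≤ T i) (hc : ∀ i ∈ t, 0 < c i)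
    (hcard : ∑ i ∈ t, (c i)⁻¹ ≤ #s) :
    ∃ a ∈ s, ∀ i ∈ t, f i a ≤ c i * T i := by
  classical
  by_contra! hbad
  have hcover : s ⊆ t.biUnion fun i ↦ {a ∈ s | c i * T i < f i a} := fun a ha ↦ by
    obtain ⟨i, hi, hlt⟩ := hbad a ha
    exact mem_biUnion.mpr ⟨i, hi, mem_filter.mpr ⟨ha, hlt⟩⟩
  refine hcard.not_gt ?_
  calc
    (#s : 𝕜) ≤ ∑ i ∈ t, (#{a ∈ s | c i * T i < f i a} : 𝕜) := by
      exact_mod_cast (card_le_card hcover).trans card_biUnion_le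
    _ < ∑ i ∈ t, (c i)⁻¹ := sum_lt_sum_of_nonempty ht fun i hi ↦
      card_filter_mul_lt_lt_inv (hf i hi) (hT i hi) (hc i hi)

end UnionBound

section DisjointFamily

variable {V P : Type*} [DecidableEq V]

theorem sum_card_inter_le_card_of_pairwiseDisjoint {s : Finset P} {L : P → Finset V}
    (hL : (s : Set P).PairwiseDisjoint L) (A : Finset V) : ∑ p ∈ s, #(A ∩ L p) ≤ #A := by
  rw [← card_biUnion fun p hp q hq hpq ↦
    (hL hp hq hpq).mono inter_subset_right inter_subset_right, ← inter_biUnion]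
  exact card_le_card inter_subset_left

theorem exists_mem_forall_sum_card_inter_le_mul {ι κ 𝕜 : Type*} [Field 𝕜] [LinearOrder 𝕜]
    [IsStrictOrderedRing 𝕜] {s : Finset P} {t : Finset ι} {L : P → Finset V} {c : ι → 𝕜}
    (hL : (s : Set P).PairwiseDisjoint L) (A : κ → Finset V) (J : ι → Finset κ)
    (ht : t.Nonempty) (hc : ∀ i ∈ t, 0 < c i) (hcard : ∑ i ∈ t, (c i)⁻¹ ≤ #s) :
    ∃ p ∈ s, ∀ i ∈ t, ∑ j ∈ J i, (#(A j ∩ L p) : 𝕜) ≤ c i * ∑ j ∈ J i, (#(A j) : 𝕜) := by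
  have sum_inter_le (i : ι) : ∑ p ∈ s, ∑ j ∈ J i, (#(A j ∩ L p) : 𝕜) ≤ ∑ j ∈ J i, (#(A j) : 𝕜) := by
    rw [sum_comm]
    gcongr with j
    exact_mod_cast sum_card_inter_le_card_of_pairwiseDisjoint hL (A j)
  exact exists_mem_forall_le_mul_of_sum_inv_le_card ht
    (fun _ _ _ _ ↦ sum_nonneg fun _ _ ↦ Nat.cast_nonneg _) (fun i _ ↦ sum_inter_le i) hc hcard

theorem marginal_strata_strong_general {K : Type*} [Fintype P] [Fintype K]
    {L : P → Finset V} (hL : Pairwise fun p q ↦ Disjoint (L p) (L q))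
    {δ ε : ℝ} (hδ : 0 < δ) (hε : 0 < ε) (S : K → Finset V)
    (hbound : 2 * (Fintype.card K : ℝ) ^ 2 + 2 * Fintype.card K / δ + 2 / ε ≤ Fintype.card P) :
    ∃ p : P,
      (∀ h, (#(S h ∩ L p) : ℝ) ≤ δ / 2 * #(S h)) ∧
      (∑ ij ∈ (univ : Finset K).offDiag, (#(symmDiff (S ij.1 ∩ L p) (S ij.2 ∩ L p)) : ℝ) ≤
        ε / 2 * ∑ ij ∈ (univ : Finset K).offDiag, (#(symmDiff (S ij.1) (S ij.2)) : ℝ)) ∧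
      (∀ i j, i ≠ j →
        (#(symmDiff (S i ∩ L p) (S j ∩ L p)) : ℝ) ≤ 1 / 2 * #(symmDiff (S i) (S j))) := by
  have symmDiff_inter (i j p) : symmDiff (S i ∩ L p) (S j ∩ L p) = symmDiff (S i) (S j) ∩ L p :=
    (inf_symmDiff_distrib_right (S i) (S j) (L p)).symm
  simp only [symmDiff_inter]
  -- `none` indexes the requirement on the sum, `some x` the one on the single set `A x`.
  let A : K ⊕ K × K → Finset V := Sum.elim S fun ij ↦ symmDiff (S ij.1) (S ij.2)
  let J : Option (K ⊕ K × K) → Finset (K ⊕ K × K) :=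
    fun i ↦ i.elim (univ.offDiag.map .inr) singleton
  let c : Option (K ⊕ K × K) → ℝ :=
    fun i ↦ i.elim (ε / 2) (Sum.elim (fun _ ↦ δ / 2) fun _ ↦ 1 / 2)
  have c_pos (i) : 0 < c i := by
    rcases i with _ | _ | _ <;> simp [c, hδ, hε]
  have sum_inv_c : ∑ i, (c i)⁻¹ =
      2 * (Fintype.card K : ℝ) ^ 2 + 2 * Fintype.card K / δ + 2 / ε := by
    simp only [c, Fintype.sum_option, Fintype.sum_sum_type, Option.elim, Sum.elim_inl,
      Sum.elim_inr, sum_const, card_univ, Fintype.card_prod, nsmul_eq_mul, Nat.cast_mul]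
    ring
  obtain ⟨p, -, hp⟩ := exists_mem_forall_sum_card_inter_le_mul (hL.set_pairwise _) A J
    univ_nonempty (fun i _ ↦ c_pos i) (sum_inv_c.trans_le hbound)
  refine ⟨p, fun h ↦ ?_, ?_, fun i j _ ↦ ?_⟩
  · simpa [A, J, c] using hp (some (.inl h)) (mem_univ _)
  · simpa [A, J, c] using hp none (mem_univ _)
  · simpa [A, J, c] using hp (some (.inr (i, j))) (mem_univ _)

end DisjointFamily

/-- Strengthened marginal strata lemma: if `ℓ + 1 ≥ 2k² + 2k/δ + 2/ε`, some part `L p`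
of the partition additionally satisfies, for every pair `i ≠ j`, that it carries at most
half of the symmetric difference `S i Δ S j`. -/
theorem marginal_strata_strong {V : Type*} [Fintype V] [DecidableEq V]
    (ℓ : ℕ) (hℓ : 1 ≤ ℓ)
    (L : Fin (ℓ + 1) → Finset V)
    (hdisj : ∀ p q : Fin (ℓ + 1), p ≠ q → Disjoint (L p) (L q))
    (hcover : Finset.univ.biUnion L = (Finset.univ : Finset V))
    (δ ε : ℝ) (hδ0 : 0 < δ) (hδ1 : δ < 1) (hε0 : 0 < ε) (hε1 : ε < 1)
    (k : ℕ) (hk : 1 ≤ k)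
    (S : Fin k → Finset V)
    (hbound : 2 * (k : ℝ) ^ 2 + 2 * k / δ + 2 / ε ≤ ((ℓ : ℝ) + 1)) :
    ∃ p : Fin (ℓ + 1),
      (∀ h : Fin k, ((S h ∩ L p).card : ℝ) ≤ (δ / 2) * (S h).card) ∧
      ((∑ ij ∈ (Finset.univ : Finset (Fin k)).offDiag,
          ((symmDiff (S ij.1 ∩ L p) (S ij.2 ∩ L p)).card : ℝ))
        ≤ (ε / 2) * ∑ ij ∈ (Finset.univ : Finset (Fin k)).offDiag,
            ((symmDiff (S ij.1) (S ij.2)).card : ℝ)) ∧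
      (∀ i j : Fin k, i ≠ j →
        ((symmDiff (S i ∩ L p) (S j ∩ L p)).card : ℝ)
          ≤ (1 / 2) * ((symmDiff (S i) (S j)).card : ℝ)) := by
  exact marginal_strata_strong_general (fun p q ↦ hdisj p q) hδ0 hε0 S (by simpa using hbound)
end

section
/- Let n ≥ 1 be an integer, let u_1, …, u_n be strictly positive real profits for items 1, …, n, and for a set X ⊆ {1,…,n} write u(X) = ∑_{h∈X} u_h. Let c, δ ∈ (0,1), let S ⊆ {1,…,n} be nonempty, define Ũ = ⌈((1−δ)/δ)·n⌉ and ũ_h = ⌊((Ũ + n)/(c·u(S)))·u_h⌋ for each h, and write ũ(X) = ∑_{h∈X} ũ_h. Then every X ⊆ {1,…,n} with u(X) ≥ c·u(S) satisfies ũ(X) ≥ Ũ. -/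
open Finset

theorem sum_sub_card_le_sum_floor {ι R : Type*} [Ring R] [LinearOrder R] [IsStrictOrderedRing R]
    [FloorRing R] (f : ι → R) (s : Finset ι) :
    ∑ i ∈ s, f i - #s ≤ ((∑ i ∈ s, ⌊f i⌋ : ℤ) : R) :=
  calc ∑ i ∈ s, f i - #s = ∑ i ∈ s, (f i - 1) := by simp
    _ ≤ ∑ i ∈ s, (⌊f i⌋ : R) := sum_le_sum fun i _ => (Int.sub_one_lt_floor (f i)).le
    _ = ((∑ i ∈ s, ⌊f i⌋ : ℤ) : R) := (Int.cast_sum s _).symm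

theorem knapsack_scaling_first_general {ι R : Type*} [Field R] [LinearOrder R]
    [IsStrictOrderedRing R] [FloorRing R] (u : ι → R) {t : R} (ht : 0 < t)
    {n : ℕ} {U : ℤ} (hU : 0 ≤ U + n)
    {X : Finset ι} (hcard : #X ≤ n) (hX : t ≤ ∑ i ∈ X, u i) :
    U ≤ ∑ i ∈ X, ⌊((U : R) + n) / t * u i⌋ := by
  have hU_cast : 0 ≤ (U : R) + n := mod_cast hU
  have hcard_cast : (#X : R) ≤ n := mod_cast hcard
  have scaled_profit_ge : (U : R) + n ≤ ∑ i ∈ X, ((U : R) + n) / t * u i :=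
    calc (U : R) + n = ((U : R) + n) / t * t := (div_mul_cancel₀ _ ht.ne').symm
      _ ≤ ((U : R) + n) / t * ∑ i ∈ X, u i :=
        mul_le_mul_of_nonneg_left hX (div_nonneg hU_cast ht.le)
      _ = ∑ i ∈ X, ((U : R) + n) / t * u i := mul_sum X u _
  have rounding_loss := sum_sub_card_le_sum_floor (fun i => ((U : R) + n) / t * u i) X
  rw [← Int.cast_le (R := R)]
  linarith

/-- Profit scaling and rounding, first direction: every `c`-optimal solution `X`
(one with `u(X) ≥ c·u(S)`) satisfies `ũ(X) ≥ Ũ` for the scaled-and-rounded profits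
`ũ h = ⌊((Ũ + n)/(c·u(S)))·u h⌋`, where `Ũ = ⌈((1-δ)/δ)·n⌉`. -/
theorem knapsack_scaling_first (n : ℕ) (hn : 1 ≤ n)
    (u : Fin n → ℝ) (hu : ∀ h, 0 < u h)
    (c δ : ℝ) (hc0 : 0 < c) (hc1 : c < 1) (hδ0 : 0 < δ) (hδ1 : δ < 1)
    (S : Finset (Fin n)) (hS : S.Nonempty)
    (U' : ℤ) (hU' : U' = ⌈((1 - δ) / δ) * (n : ℝ)⌉)
    (u' : Fin n → ℤ)
    (hu' : ∀ h, u' h = ⌊(((U' : ℝ) + n) / (c * ∑ i ∈ S, u i)) * u h⌋)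
    (X : Finset (Fin n)) (hX : c * ∑ i ∈ S, u i ≤ ∑ i ∈ X, u i) :
    U' ≤ ∑ i ∈ X, u' i := by
  have target_pos : 0 < c * ∑ i ∈ S, u i := mul_pos hc0 (sum_pos (fun i _ => hu i) hS)
  have threshold_nonneg : 0 ≤ U' :=
    hU' ▸ Int.ceil_nonneg (mul_nonneg (div_nonneg (sub_nonneg.2 hδ1.le) hδ0.le) n.cast_nonneg)
  simpa only [hu'] using
    knapsack_scaling_first_general u target_pos (by positivity) (card_finset_fin_le X) hX
end

section
/- Let n ≥ 1 be an integer, let u_1, …, u_n be strictly positive real profits for items 1, …, n, and for a set X ⊆ {1,…,n} write u(X) = ∑_{h∈X} u_h. Let c, δ ∈ (0,1), let S ⊆ {1,…,n} be nonempty, define Ũ = ⌈((1−δ)/δ)·n⌉ and ũ_h = ⌊((Ũ + n)/(c·u(S)))·u_h⌋ for each h, and write ũ(X) = ∑_{h∈X} ũ_h. Then every Y ⊆ {1,…,n} with ũ(Y) ≥ Ũ satisfies u(Y) ≥ c·(1−δ)·u(S). -/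
open Finset

/-!
Rounding down only loses profit, so `Ũ ≤ ũ(Y)` gives `Ũ ≤ (Ũ + n) / (c u(S)) * u(Y)`. The threshold
`Ũ` is chosen so that the slack `n` is at most the fraction `δ` of `Ũ + n`; thus
`(1 - δ) (Ũ + n) ≤ Ũ`, and cancelling `Ũ + n` leaves the claim.
-/

section FloorSum

variable {ι R : Type*} [Ring R] [LinearOrder R] [IsStrictOrderedRing R] [FloorRing R]

theorem sum_floor_mul_le_mul_sum (a : R) (u : ι → R) (s : Finset ι) :
    ((∑ i ∈ s, ⌊a * u i⌋ : ℤ) : R) ≤ a * ∑ i ∈ s, u i := by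
  rw [Int.cast_sum, mul_sum]
  exact sum_le_sum fun i _ => Int.floor_le (a * u i)

end FloorSum

section Scaling

variable {K : Type*} [Field K] [LinearOrder K] [IsStrictOrderedRing K]

theorem one_sub_div_mul_le_iff_le_mul_add {δ N T : K} (hδ : 0 < δ) :
    (1 - δ) / δ * N ≤ T ↔ N ≤ δ * (T + N) := by
  rw [div_mul_eq_mul_div, div_le_iff₀ hδ]
  constructor <;> intro h <;> linarith

theorem mul_le_div_mul_iff_mul_le {a r x W : K} (hW : 0 < W) (ha : 0 < a) :
    r * W ≤ W / a * x ↔ r * a ≤ x := by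
  rw [div_mul_comm, mul_le_mul_iff_left₀ hW, le_div_iff₀ ha]

theorem knapsack_scaling_second_general [FloorRing K] {ι : Type*} (u : ι → K) {c δ N : K}
    (hc : 0 < c) (hδ : 0 < δ) (hN : 0 < N) (S : Finset ι) (hS : 0 < ∑ i ∈ S, u i)
    (U' : ℤ) (hU' : U' = ⌈(1 - δ) / δ * N⌉)
    (u' : ι → ℤ) (hu' : ∀ i, u' i = ⌊(U' + N) / (c * ∑ j ∈ S, u j) * u i⌋)
    (Y : Finset ι) (hY : U' ≤ ∑ i ∈ Y, u' i) :
    c * (1 - δ) * ∑ i ∈ S, u i ≤ ∑ i ∈ Y, u i := by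
  have hslack : N ≤ δ * (U' + N) :=
    (one_sub_div_mul_le_iff_le_mul_add hδ).mp (hU' ▸ Int.le_ceil _)
  have hpos : 0 < U' + N := pos_of_mul_pos_right (hN.trans_le hslack) hδ.le
  have hscaled : (1 - δ) * (U' + N) ≤ (U' + N) / (c * ∑ i ∈ S, u i) * ∑ i ∈ Y, u i :=
    calc
      (1 - δ) * (U' + N) ≤ U' := by linarith
      _ ≤ ((∑ i ∈ Y, u' i : ℤ) : K) := Int.cast_le.mpr hY
      _ ≤ (U' + N) / (c * ∑ i ∈ S, u i) * ∑ i ∈ Y, u i := by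
        simp only [hu']
        exact sum_floor_mul_le_mul_sum _ u Y
  calc
    c * (1 - δ) * ∑ i ∈ S, u i = (1 - δ) * (c * ∑ i ∈ S, u i) := by ring
    _ ≤ ∑ i ∈ Y, u i := (mul_le_div_mul_iff_mul_le hpos (mul_pos hc hS)).mp hscaled

end Scaling

/-- Profit scaling and rounding, second direction: every solution `Y` meeting the scaled
threshold, i.e. `ũ(Y) ≥ Ũ` for the scaled-and-rounded profits
`ũ h = ⌊((Ũ + n)/(c·u(S)))·u h⌋` with `Ũ = ⌈((1-δ)/δ)·n⌉`,
has original profit `u(Y) ≥ c·(1-δ)·u(S)`. -/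
theorem knapsack_scaling_second (n : ℕ) (hn : 1 ≤ n)
    (u : Fin n → ℝ) (hu : ∀ h, 0 < u h)
    (c δ : ℝ) (hc0 : 0 < c) (hc1 : c < 1) (hδ0 : 0 < δ) (hδ1 : δ < 1)
    (S : Finset (Fin n)) (hS : S.Nonempty)
    (U' : ℤ) (hU' : U' = ⌈((1 - δ) / δ) * (n : ℝ)⌉)
    (u' : Fin n → ℤ)
    (hu' : ∀ h, u' h = ⌊(((U' : ℝ) + n) / (c * ∑ i ∈ S, u i)) * u h⌋)
    (Y : Finset (Fin n)) (hY : U' ≤ ∑ i ∈ Y, u' i) :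
    c * (1 - δ) * ∑ i ∈ S, u i ≤ ∑ i ∈ Y, u i :=
  knapsack_scaling_second_general u hc0 hδ0 (Nat.cast_pos.mpr hn) S
    (sum_pos (fun i _ => hu i) hS) U' hU' u' hu' Y hY
end

section
/- Let n ≥ 1 be an integer and consider the knapsack instance I_n with 2n items indexed by pairs (i,b), i ∈ {1,…,n}, b ∈ {0,1}, where item (i,b) has weight 2^i and value 4^i, and the knapsack capacity is 2^{n+1} − 2. Then: (a) every set T of items with total weight at most 2^{n+1} − 2 has total value at most ∑_{i=1}^n 4^i; and (b) a set T of items with total weight at most 2^{n+1} − 2 has total value exactly ∑_{i=1}^n 4^i if and only if, for every i ∈ {1,…,n}, T contains exactly one of the two items (i,0), (i,1). In particular, the optimal value of I_n equals ∑_{i=1}^n 4^i, and every optimal packing has total weight exactly 2^{n+1} − 2. -/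
open Finset

/-- The weight of a set of items of the knapsack instance `I n`: item `(i, b)` (with
`i : Fin n` representing item index `i+1 ∈ {1,…,n}`) has weight `2^(i+1)`. -/
def knapWeight (n : ℕ) (T : Finset (Fin n × Bool)) : ℕ :=
  ∑ x ∈ T, 2 ^ (x.1.1 + 1)

/-- The value of a set of items of the knapsack instance `I n`: item `(i, b)` has value
`4^(i+1)`. -/
def knapValue (n : ℕ) (T : Finset (Fin n × Bool)) : ℕ :=
  ∑ x ∈ T, 4 ^ (x.1.1 + 1)

/-!
An item has value equal to the square of its weight, and the capacity is the total weight of one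
item per level. Because the weights double from one level to the next, two items of the top level
exceed the capacity. If no top item is packed, every packed item has value at most half the top
weight times its own weight, so the whole packing is worth less than a single top item. Hence a
packing not beaten outright has exactly one top item, and removing it leaves the same problem with
one level fewer.
-/

section FiberCard

variable {ι κ M : Type*} [DecidableEq κ] [AddCommMonoid M] {s : Finset ι} {t : Finset κ} {g : ι → κ}

theorem sum_comp_eq_sum_card_smul_of_maps_to (hg : ∀ x ∈ s, g x ∈ t) (f : κ → M) :
    ∑ x ∈ s, f (g x) = ∑ j ∈ t, #{x ∈ s | g x = j} • f j := by
  simp only [← sum_fiberwise_of_maps_to' hg, sum_const]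

theorem sum_comp_eq_sum_of_card_fiber_eq_one (hg : ∀ x ∈ s, g x ∈ t)
    (hcard : ∀ j ∈ t, #{x ∈ s | g x = j} = 1) (f : κ → M) :
    ∑ x ∈ s, f (g x) = ∑ j ∈ t, f j := by
  rw [sum_comp_eq_sum_card_smul_of_maps_to hg]
  exact sum_congr rfl fun j hj => by rw [hcard j hj, one_smul]

end FiberCard

theorem card_filter_fst_eq_one_iff_xor {α : Type*} [DecidableEq α] (T : Finset (α × Bool)) (a : α) :
    #{x ∈ T | x.1 = a} = 1 ↔ Xor ((a, false) ∈ T) ((a, true) ∈ T) := by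
  have hfiber :
      {x ∈ T | x.1 = a} = {x ∈ ({(a, false), (a, true)} : Finset (α × Bool)) | x ∈ T} := by
    ext ⟨b, _ | _⟩ <;> simp [and_comm]
  rw [hfiber]
  by_cases hfalse : (a, false) ∈ T <;> by_cases htrue : (a, true) ∈ T <;>
    simp [filter_insert, filter_singleton, hfalse, htrue]

section Doubling

variable {R : Type*} [CommSemiring R] [LinearOrder R] [IsStrictOrderedRing R] {w : ℕ → R}

theorem sum_range_lt_of_two_mul_le_succ (hzero : 0 < w 0) (hdouble : ∀ i, 2 * w i ≤ w (i + 1))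
    (n : ℕ) : ∑ i ∈ range n, w i < w n := by
  induction n with
  | zero => simpa using hzero
  | succ n ih =>
    calc ∑ i ∈ range (n + 1), w i = ∑ i ∈ range n, w i + w n := sum_range_succ w n
      _ < w n + w n := by gcongr
      _ = 2 * w n := (two_mul _).symm
      _ ≤ w (n + 1) := hdouble n

theorem sum_range_succ_lt_two_mul_of_two_mul_le_succ (hzero : 0 < w 0)
    (hdouble : ∀ i, 2 * w i ≤ w (i + 1)) (n : ℕ) : ∑ i ∈ range (n + 1), w i < 2 * w n := by
  rw [sum_range_succ, two_mul]
  gcongr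
  exact sum_range_lt_of_two_mul_le_succ hzero hdouble n

theorem two_mul_le_of_two_mul_le_succ (hnonneg : ∀ i, 0 ≤ w i)
    (hdouble : ∀ i, 2 * w i ≤ w (i + 1)) {i n : ℕ} (hin : i < n) : 2 * w i ≤ w n := by
  have hmono : Monotone w := monotone_nat_of_le_succ fun i =>
    (le_mul_of_one_le_left (hnonneg i) one_le_two).trans (hdouble i)
  exact (hdouble i).trans (hmono hin)

variable {c : ℕ → ℕ} {n : ℕ}

theorem sum_smul_sq_lt_sq_of_sum_smul_le_sum_succ (hpos : ∀ i, 0 < w i)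
    (hdouble : ∀ i, 2 * w i ≤ w (i + 1))
    (hcap : ∑ i ∈ range n, c i • w i ≤ ∑ i ∈ range (n + 1), w i) :
    ∑ i ∈ range n, c i • w i ^ 2 < w n ^ 2 := by
  have hterm : ∀ i ∈ range n, 2 * (c i • w i ^ 2) ≤ w n * (c i • w i) := fun i hi =>
    calc 2 * (c i • w i ^ 2) = (2 * w i) * (c i • w i) := by simp only [nsmul_eq_mul]; ring
      _ ≤ w n * (c i • w i) := by
        have hle := two_mul_le_of_two_mul_le_succ (fun j => (hpos j).le) hdouble (mem_range.1 hi)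
        have hnonneg := nsmul_nonneg (hpos i).le (c i)
        gcongr
  have htotal : ∑ i ∈ range (n + 1), w i < 2 * w n :=
    sum_range_succ_lt_two_mul_of_two_mul_le_succ (hpos 0) hdouble n
  refine lt_of_mul_lt_mul_left (a := 2) ?_ zero_le_two
  calc 2 * ∑ i ∈ range n, c i • w i ^ 2 ≤ w n * ∑ i ∈ range n, c i • w i := by
        simpa only [mul_sum] using sum_le_sum hterm
    _ ≤ w n * ∑ i ∈ range (n + 1), w i := mul_le_mul_of_nonneg_left hcap (hpos n).le
    _ < w n * (2 * w n) := mul_lt_mul_of_pos_left htotal (hpos n)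
    _ = 2 * w n ^ 2 := by ring

theorem lt_two_of_sum_smul_le_sum_succ (hpos : ∀ i, 0 < w i)
    (hdouble : ∀ i, 2 * w i ≤ w (i + 1))
    (hcap : ∑ i ∈ range (n + 1), c i • w i ≤ ∑ i ∈ range (n + 1), w i) : c n < 2 := by
  by_contra! htwo
  refine hcap.not_gt ?_
  calc ∑ i ∈ range (n + 1), w i < 2 * w n :=
        sum_range_succ_lt_two_mul_of_two_mul_le_succ (hpos 0) hdouble n
    _ = 2 • w n := by rw [two_mul, two_nsmul]
    _ ≤ c n • w n := nsmul_le_nsmul_left (hpos n).le htwo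
    _ ≤ ∑ i ∈ range (n + 1), c i • w i :=
      single_le_sum (f := fun i => c i • w i) (fun i _ => nsmul_nonneg (hpos i).le (c i))
        (self_mem_range_succ n)

theorem forall_eq_one_or_sum_smul_sq_lt (hpos : ∀ i, 0 < w i)
    (hdouble : ∀ i, 2 * w i ≤ w (i + 1))
    (hcap : ∑ i ∈ range n, c i • w i ≤ ∑ i ∈ range n, w i) :
    (∀ i < n, c i = 1) ∨ ∑ i ∈ range n, c i • w i ^ 2 < ∑ i ∈ range n, w i ^ 2 := by
  induction n with
  | zero => simp
  | succ n ih =>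
    have htop : c n < 2 := lt_two_of_sum_smul_le_sum_succ hpos hdouble hcap
    rw [sum_range_succ] at hcap
    rw [sum_range_succ, sum_range_succ]
    interval_cases hcn : c n
    · right
      rw [zero_smul, add_zero] at hcap ⊢
      exact (sum_smul_sq_lt_sq_of_sum_smul_le_sum_succ hpos hdouble hcap).trans_le
        (le_add_of_nonneg_left (sum_nonneg fun i _ => pow_nonneg (hpos i).le 2))
    · rw [sum_range_succ, one_smul, add_le_add_iff_right] at hcap
      rw [one_smul, add_lt_add_iff_right]
      exact (ih hcap).imp_left fun hone => Nat.forall_lt_succ_right.2 ⟨hone, hcn⟩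

end Doubling

theorem sum_range_two_pow_succ (n : ℕ) : ∑ i ∈ range n, 2 ^ (i + 1) = 2 ^ (n + 1) - 2 := by
  simp [pow_succ, ← sum_mul, Nat.geomSum_eq, Nat.sub_mul]

section Packing

variable {n : ℕ} {T : Finset (Fin n × Bool)}

theorem sum_fst_eq_sum_range_of_forall_xor {M : Type*} [AddCommMonoid M]
    (hT : ∀ i : Fin n, Xor ((i, false) ∈ T) ((i, true) ∈ T)) (f : ℕ → M) :
    ∑ x ∈ T, f x.1 = ∑ i ∈ range n, f i := by
  rw [← Fin.sum_univ_eq_sum_range]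
  exact sum_comp_eq_sum_of_card_fiber_eq_one (fun _ _ => mem_univ _)
    (fun i _ => (card_filter_fst_eq_one_iff_xor T i).2 (hT i)) fun i => f i

theorem knapWeight_eq_of_forall_xor (hT : ∀ i : Fin n, Xor ((i, false) ∈ T) ((i, true) ∈ T)) :
    knapWeight n T = 2 ^ (n + 1) - 2 :=
  (sum_fst_eq_sum_range_of_forall_xor hT fun i => 2 ^ (i + 1)).trans (sum_range_two_pow_succ n)

theorem knapValue_eq_of_forall_xor (hT : ∀ i : Fin n, Xor ((i, false) ∈ T) ((i, true) ∈ T)) :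
    knapValue n T = ∑ i ∈ range n, 4 ^ (i + 1) :=
  sum_fst_eq_sum_range_of_forall_xor hT fun i => 4 ^ (i + 1)

theorem forall_xor_or_knapValue_lt (hT : knapWeight n T ≤ 2 ^ (n + 1) - 2) :
    (∀ i : Fin n, Xor ((i, false) ∈ T) ((i, true) ∈ T)) ∨
      knapValue n T < ∑ i ∈ range n, 4 ^ (i + 1) := by
  have hlevel : ∀ x ∈ T, (x.1 : ℕ) ∈ range n := fun x _ => mem_range.2 x.1.isLt
  have hsq : ∀ i : ℕ, 4 ^ (i + 1) = (2 ^ (i + 1)) ^ 2 := fun i => by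
    rw [pow_right_comm]; norm_num
  rw [knapWeight, ← sum_range_two_pow_succ,
    sum_comp_eq_sum_card_smul_of_maps_to hlevel fun i => 2 ^ (i + 1)] at hT
  rw [knapValue, sum_comp_eq_sum_card_smul_of_maps_to hlevel fun i => 4 ^ (i + 1)]
  simp only [hsq]
  refine (forall_eq_one_or_sum_smul_sq_lt (fun i => by positivity)
    (fun i => (pow_succ' 2 (i + 1)).ge) hT).imp_left fun hone i => ?_
  rw [← card_filter_fst_eq_one_iff_xor]
  simpa only [Fin.val_inj] using hone i i.isLt

end Packing

/-- Structure of optimal packings of the instance `I n` (capacity `2^(n+1) - 2`):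
(a) every packing has value at most `∑_{i=1}^n 4^i`;
(b) a packing has value exactly `∑_{i=1}^n 4^i` iff it contains exactly one item of each
pair `{(i, false), (i, true)}`;
moreover the optimal value `∑_{i=1}^n 4^i` is attained, and every optimal packing has
total weight exactly `2^(n+1) - 2`. -/
theorem knapsack_instance_structure (n : ℕ) (hn : 1 ≤ n) :
    (∀ T : Finset (Fin n × Bool), knapWeight n T ≤ 2 ^ (n + 1) - 2 →
        knapValue n T ≤ ∑ i ∈ Finset.range n, 4 ^ (i + 1)) ∧
    (∀ T : Finset (Fin n × Bool), knapWeight n T ≤ 2 ^ (n + 1) - 2 →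
        (knapValue n T = ∑ i ∈ Finset.range n, 4 ^ (i + 1) ↔
          ∀ i : Fin n, Xor' ((i, false) ∈ T) ((i, true) ∈ T))) ∧
    (∃ T : Finset (Fin n × Bool), knapWeight n T ≤ 2 ^ (n + 1) - 2 ∧
        knapValue n T = ∑ i ∈ Finset.range n, 4 ^ (i + 1)) ∧
    (∀ T : Finset (Fin n × Bool), knapWeight n T ≤ 2 ^ (n + 1) - 2 →
        knapValue n T = ∑ i ∈ Finset.range n, 4 ^ (i + 1) →
        knapWeight n T = 2 ^ (n + 1) - 2) := by
  have hxor_of_optimal (T : Finset (Fin n × Bool)) (hT : knapWeight n T ≤ 2 ^ (n + 1) - 2)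
      (hvalue : knapValue n T = ∑ i ∈ range n, 4 ^ (i + 1)) (i : Fin n) :
      Xor ((i, false) ∈ T) ((i, true) ∈ T) :=
    (forall_xor_or_knapValue_lt hT).resolve_right hvalue.not_lt i
  refine ⟨fun T hT => ?_, fun T hT => ⟨hxor_of_optimal T hT, knapValue_eq_of_forall_xor⟩, ?_,
    fun T hT hvalue => knapWeight_eq_of_forall_xor (hxor_of_optimal T hT hvalue)⟩
  · exact (forall_xor_or_knapValue_lt hT).elim (fun hxor => (knapValue_eq_of_forall_xor hxor).le)
      le_of_lt
  · have hxor : ∀ i : Fin n, Xor ((i, false) ∈ univ ×ˢ {true}) ((i, true) ∈ univ ×ˢ {true}) := by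
      simp
    exact ⟨univ ×ˢ {true}, (knapWeight_eq_of_forall_xor hxor).le, knapValue_eq_of_forall_xor hxor⟩
end

section
/- Let n ≥ 1 be an integer and consider the knapsack instance I_n (items (i,b) for i ∈ {1,…,n}, b ∈ {0,1}, with weight 2^i and value 4^i, capacity 2^{n+1} − 2). The map sending an optimal packing T to the binary word x_T ∈ {0,1}^n defined by x_T(i) = b, where (i,b) is the unique item of the pair {(i,0),(i,1)} contained in T, is a bijection between the set of optimal packings of I_n and {0,1}^n. Moreover, for any two optimal packings T, T', the symmetric difference satisfies |T Δ T'| = 2·d_H(x_T, x_{T'}), where d_H denotes Hamming distance on {0,1}^n. -/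
open Finset

/-- An optimal packing of the instance `I n`: a set of items of weight at most the
capacity `2^(n+1) - 2` and of maximum value among all such sets. -/
def IsOptimalPacking (n : ℕ) (T : Finset (Fin n × Bool)) : Prop :=
  knapWeight n T ≤ 2 ^ (n + 1) - 2 ∧
  ∀ T' : Finset (Fin n × Bool), knapWeight n T' ≤ 2 ^ (n + 1) - 2 →
    knapValue n T' ≤ knapValue n T

/-!
A set `T` of items contains 0, 1 or 2 of the items `(i, 0)`, `(i, 1)`; subtracting 1 gives a digit
`d i ∈ {-1, 0, 1}`. The weight of `T` minus the capacity is `∑ d i * 2 ^ i`, and the value of `T`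
minus `∑ 4 ^ i` is `∑ d i * 4 ^ i`. Powers of 2 and powers of 4 are both superincreasing, so each of
these sums has the sign of the nonzero digit of largest index. Hence `T` fits in the knapsack iff
its value is at most `∑ 4 ^ i`, and it is optimal iff all digits vanish, i.e. iff `T` is the graph
of a binary word.
-/

section Superincreasing

variable {ι R S : Type*}

/-- A family of positive elements, each exceeding the sum of all the earlier ones. -/
structure Superincreasing [Preorder ι] [LocallyFiniteOrderBot ι] [AddCommMonoid R] [Preorder R]
    (w : ι → R) : Prop where
  pos : ∀ i, 0 < w i
  sum_Iio_lt : ∀ i, ∑ j ∈ Iio i, w j < w i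

variable [LinearOrder ι]
variable [Ring R] [LinearOrder R] [IsStrictOrderedRing R]
variable [Ring S] [LinearOrder S] [IsStrictOrderedRing S]

theorem superincreasing_natCast_pow [LocallyFiniteOrderBot ι] {e : ι → ℕ} (he : StrictMono e)
    {a : ℕ} (ha : 2 ≤ a) : Superincreasing fun i ↦ (a : R) ^ e i where
  pos i := by positivity
  sum_Iio_lt i := by
    have sum_lt : ∑ k ∈ (Iio i).image e, a ^ k < a ^ e i :=
      Nat.geomSum_lt ha <| by simpa using fun j hj ↦ he hj
    rw [sum_image he.injective.injOn] at sum_lt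
    exact_mod_cast sum_lt

theorem abs_signType_coe_le_one (s : SignType) : |(s : R)| ≤ 1 := by
  cases s <;> simp

theorem sign_signType_coe_mul_add {s : SignType} (hs : s ≠ 0) {x r : R} (hr : |r| < x) :
    SignType.sign (s * x + r) = s := by
  obtain ⟨neg_lt, lt⟩ := abs_lt.mp hr
  obtain rfl | rfl | rfl := s.trichotomy
  · refine sign_neg ?_
    simpa using lt
  · exact absurd rfl hs
  · refine sign_pos ?_
    simpa [← neg_lt_iff_pos_add'] using neg_lt

theorem exists_leading_ne_zero [Finite ι] {M : Type*} [Zero M] {d : ι → M} (hd : d ≠ 0) :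
    ∃ m, d m ≠ 0 ∧ ∀ j, m < j → d j = 0 := by
  obtain ⟨m, hm⟩ := (Set.toFinite {i | d i ≠ 0}).exists_maximal (Function.ne_iff.mp hd)
  exact ⟨m, hm.prop, fun j hj ↦ not_not.mp (hm.not_prop_of_gt hj)⟩

variable [Fintype ι] [LocallyFiniteOrderBot ι]

theorem sum_eq_add_sum_Iio {M : Type*} [AddCommMonoid M] {f : ι → M} {m : ι}
    (hf : ∀ j, m < j → f j = 0) : ∑ i, f i = f m + ∑ i ∈ Iio m, f i := by
  rw [← sum_insert (by simp), Iio_insert]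
  exact (sum_subset (subset_univ _) fun j _ hj ↦ hf j (by simpa using hj)).symm

namespace Superincreasing

variable {w : ι → R} {v : ι → S} {d : ι → SignType}

theorem sign_sum_eq_leading (hw : Superincreasing w) {m : ι} (hm : d m ≠ 0)
    (hd : ∀ j, m < j → d j = 0) : SignType.sign (∑ i, (d i : R) * w i) = d m := by
  have tail_lt : |∑ i ∈ Iio m, (d i : R) * w i| < w m :=
    calc |∑ i ∈ Iio m, (d i : R) * w i|
      _ ≤ ∑ i ∈ Iio m, |(d i : R) * w i| := abs_sum_le_sum_abs _ _
      _ ≤ ∑ i ∈ Iio m, w i := sum_le_sum fun i _ ↦ by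
        rw [abs_mul, abs_of_pos (hw.pos i)]
        exact mul_le_of_le_one_left (hw.pos i).le (abs_signType_coe_le_one _)
      _ < w m := hw.sum_Iio_lt m
  rw [sum_eq_add_sum_Iio fun j hj ↦ by simp [hd j hj]]
  exact sign_signType_coe_mul_add hm tail_lt

theorem sign_sum_eq_sign_sum (hw : Superincreasing w) (hv : Superincreasing v)
    (d : ι → SignType) :
    SignType.sign (∑ i, (d i : R) * w i) = SignType.sign (∑ i, (d i : S) * v i) := by
  obtain rfl | hd := eq_or_ne d 0
  · simp
  · obtain ⟨m, hm, hlead⟩ := exists_leading_ne_zero hd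
    rw [hw.sign_sum_eq_leading hm hlead, hv.sign_sum_eq_leading hm hlead]

theorem sum_eq_zero_iff (hw : Superincreasing w) : ∑ i, (d i : R) * w i = 0 ↔ d = 0 := by
  refine ⟨fun hsum ↦ ?_, by rintro rfl; simp⟩
  by_contra hd
  obtain ⟨m, hm, hlead⟩ := exists_leading_ne_zero hd
  have leading_eq := hw.sign_sum_eq_leading hm hlead
  rw [hsum, sign_zero] at leading_eq
  exact hm leading_eq.symm

end Superincreasing

end Superincreasing

section FunctionGraph

variable {ι β : Type*} [Fintype ι]

/-- The graph of a function on a finite type, as a finite set of pairs. For `β = Bool` it is the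
packing that a binary word encodes. -/
def functionGraph (x : ι → β) : Finset (ι × β) :=
  univ.map ⟨fun i ↦ (i, x i), Function.LeftInverse.injective (g := Prod.fst) fun _ ↦ rfl⟩

theorem mem_functionGraph {x : ι → β} {p : ι × β} : p ∈ functionGraph x ↔ p.2 = x p.1 := by
  obtain ⟨i, b⟩ := p
  simp [functionGraph, eq_comm]

theorem functionGraph_injective :
    Function.Injective (functionGraph : (ι → β) → Finset (ι × β)) := fun x y hxy ↦ by
  funext i
  have mem_graph : (i, x i) ∈ functionGraph y := hxy ▸ mem_functionGraph.mpr rfl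
  exact mem_functionGraph.mp mem_graph

variable [DecidableEq ι] [DecidableEq β]

theorem card_functionGraph_sdiff (x y : ι → β) :
    #(functionGraph x \ functionGraph y) = hammingDist x y := by
  have sdiff_eq : functionGraph x \ functionGraph y =
      ({i | x i ≠ y i} : Finset ι).image fun i ↦ (i, x i) := by
    ext ⟨i, b⟩
    simp only [mem_sdiff, mem_functionGraph, mem_image, mem_filter_univ, Prod.mk.injEq]
    grind
  rw [sdiff_eq, card_image_of_injective _ fun _ _ h ↦ congrArg Prod.fst h, hammingDist]

theorem card_symmDiff_functionGraph (x y : ι → β) :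
    #(symmDiff (functionGraph x) (functionGraph y)) = 2 * hammingDist x y := by
  rw [symmDiff_def, sup_eq_union, card_union_of_disjoint disjoint_sdiff_sdiff,
    card_functionGraph_sdiff, card_functionGraph_sdiff, hammingDist_comm y x, two_mul]

end FunctionGraph

section Excess

variable {ι R : Type*} [DecidableEq ι]

/-- The number of items `(i, b)` in `T`, minus one. It lies in `{-1, 0, 1}` because there are only
two items of index `i`, and is recorded as a sign. -/
noncomputable def excess (T : Finset (ι × Bool)) (i : ι) : SignType :=
  SignType.sign ((#{b | (i, b) ∈ T} : ℤ) - 1)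

theorem coe_excess [AddGroupWithOne R] (T : Finset (ι × Bool)) (i : ι) :
    (excess T i : R) = #{b | (i, b) ∈ T} - 1 := by
  have card_le_two : #{b | (i, b) ∈ T} ≤ 2 := card_le_univ _
  unfold excess
  interval_cases #{b | (i, b) ∈ T} <;> simp [← one_add_one_eq_two]

variable [Fintype ι]

theorem excess_eq_zero_iff_mem_range {T : Finset (ι × Bool)} :
    excess T = 0 ↔ T ∈ Set.range functionGraph := by
  have excess_eq_zero_iff_card (i : ι) : excess T i = 0 ↔ #{b | (i, b) ∈ T} = 1 := by
    rw [excess, sign_eq_zero_iff, sub_eq_zero, Nat.cast_eq_one]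
  simp only [funext_iff, Pi.zero_apply, excess_eq_zero_iff_card, card_eq_one, Finset.ext_iff,
    mem_filter_univ, mem_singleton, Set.mem_range, mem_functionGraph, Prod.forall]
  rw [Classical.skolem]
  simp only [iff_comm]

theorem sum_fst_sub_sum [Ring R] (T : Finset (ι × Bool)) (w : ι → R) :
    ∑ p ∈ T, w p.1 - ∑ i, w i = ∑ i, (excess T i : R) * w i := by
  have sum_fst : ∑ p ∈ T, w p.1 = ∑ i, (#{b | (i, b) ∈ T} : R) * w i := by
    rw [sum_finset_product T univ (fun i ↦ {b | (i, b) ∈ T}) (by simp)]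
    simp
  simp only [sum_fst, coe_excess, sub_mul, one_mul, sum_sub_distrib]

end Excess

namespace Superincreasing

variable {ι R S : Type*} [LinearOrder ι] [LocallyFiniteOrderBot ι] [Fintype ι]
variable [Ring R] [LinearOrder R] [IsStrictOrderedRing R]
variable [Ring S] [LinearOrder S] [IsStrictOrderedRing S]
variable {w : ι → R} {v : ι → S}

theorem sum_fst_le_sum_iff_sum_fst_le_sum (hw : Superincreasing w) (hv : Superincreasing v)
    (T : Finset (ι × Bool)) :
    ∑ p ∈ T, w p.1 ≤ ∑ i, w i ↔ ∑ p ∈ T, v p.1 ≤ ∑ i, v i := by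
  rw [← sub_nonpos, sum_fst_sub_sum, ← sign_nonpos_iff, hw.sign_sum_eq_sign_sum hv,
    sign_nonpos_iff, ← sum_fst_sub_sum, sub_nonpos]

theorem sum_fst_eq_sum_iff_mem_range (hw : Superincreasing w) {T : Finset (ι × Bool)} :
    ∑ p ∈ T, w p.1 = ∑ i, w i ↔ T ∈ Set.range functionGraph := by
  rw [← sub_eq_zero, sum_fst_sub_sum, hw.sum_eq_zero_iff, excess_eq_zero_iff_mem_range]

end Superincreasing

section Knapsack

variable {n : ℕ} {T : Finset (Fin n × Bool)}

theorem superincreasing_natCast_pow_succ {a : ℕ} (ha : 2 ≤ a) :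
    Superincreasing fun i : Fin n ↦ (a : ℤ) ^ (i.1 + 1) :=
  superincreasing_natCast_pow (e := fun i : Fin n ↦ i.1 + 1)
    (fun _ _ hij ↦ Nat.succ_lt_succ hij) ha

theorem sum_two_pow_succ (n : ℕ) : ∑ i : Fin n, 2 ^ (i.1 + 1) = 2 ^ (n + 1) - 2 := by
  rw [Fin.sum_univ_eq_sum_range fun i ↦ 2 ^ (i + 1)]
  simp only [pow_succ, ← sum_mul, Nat.geomSum_eq le_rfl]
  lia

theorem knapWeight_le_iff_knapValue_le :
    knapWeight n T ≤ 2 ^ (n + 1) - 2 ↔ knapValue n T ≤ ∑ i : Fin n, 4 ^ (i.1 + 1) := by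
  rw [← sum_two_pow_succ, knapWeight, knapValue]
  have two_pow := superincreasing_natCast_pow_succ (n := n) (a := 2) le_rfl
  have four_pow := superincreasing_natCast_pow_succ (n := n) (a := 4) (by norm_num)
  exact_mod_cast two_pow.sum_fst_le_sum_iff_sum_fst_le_sum four_pow T

theorem knapValue_eq_sum_iff_mem_range :
    knapValue n T = ∑ i : Fin n, 4 ^ (i.1 + 1) ↔ T ∈ Set.range functionGraph := by
  have four_pow := superincreasing_natCast_pow_succ (n := n) (a := 4) (by norm_num)
  rw [← four_pow.sum_fst_eq_sum_iff_mem_range, knapValue]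
  norm_cast

theorem isOptimalPacking_iff_mem_range : IsOptimalPacking n T ↔ T ∈ Set.range functionGraph := by
  simp only [IsOptimalPacking, knapWeight_le_iff_knapValue_le]
  constructor
  · rintro ⟨value_le, value_max⟩
    have value_word : knapValue n (functionGraph fun _ ↦ false) = ∑ i : Fin n, 4 ^ (i.1 + 1) :=
      knapValue_eq_sum_iff_mem_range.mpr (Set.mem_range_self _)
    have le_value : ∑ i : Fin n, 4 ^ (i.1 + 1) ≤ knapValue n T :=
      value_word ▸ value_max _ value_word.le
    exact knapValue_eq_sum_iff_mem_range.mp (value_le.antisymm le_value)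
  · intro hT
    have value_eq := knapValue_eq_sum_iff_mem_range.mpr hT
    exact ⟨value_eq.le, fun T' value_le ↦ value_le.trans value_eq.ge⟩

/-- The correspondence between binary words and optimal packings; its inverse is the map `T ↦ x_T`
of the theorem. -/
noncomputable def wordEquivOptimalPacking (n : ℕ) :
    (Fin n → Bool) ≃ {T : Finset (Fin n × Bool) // IsOptimalPacking n T} :=
  (Equiv.ofInjective functionGraph functionGraph_injective).trans
    (Equiv.subtypeEquivRight fun _ ↦ isOptimalPacking_iff_mem_range.symm)

theorem coe_wordEquivOptimalPacking (x : Fin n → Bool) :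
    (wordEquivOptimalPacking n x : Finset (Fin n × Bool)) = functionGraph x :=
  rfl

end Knapsack

/-- The map sending an optimal packing `T` of `I n` to the binary word `x_T ∈ {0,1}^n`,
where `x_T i` is the unique `b` with `(i, b) ∈ T`, is a bijection between optimal packings
and binary words of length `n`; moreover `|T Δ T'| = 2·d_H(x_T, x_{T'})`. -/
theorem optimal_packings_equiv_words (n : ℕ) (hn : 1 ≤ n) :
    ∃ x : {T : Finset (Fin n × Bool) // IsOptimalPacking n T} → (Fin n → Bool),
      (∀ T : {T : Finset (Fin n × Bool) // IsOptimalPacking n T},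
        ∀ i : Fin n, (i, x T i) ∈ T.1) ∧
      Function.Bijective x ∧
      (∀ T T' : {T : Finset (Fin n × Bool) // IsOptimalPacking n T},
        (symmDiff T.1 T'.1).card = 2 * hammingDist (x T) (x T')) := by
  refine ⟨(wordEquivOptimalPacking n).symm, fun T i ↦ ?_, Equiv.bijective _, fun T T' ↦ ?_⟩
  · obtain ⟨x, rfl⟩ := (wordEquivOptimalPacking n).surjective T
    rw [Equiv.symm_apply_apply, coe_wordEquivOptimalPacking, mem_functionGraph]
  · obtain ⟨x, rfl⟩ := (wordEquivOptimalPacking n).surjective T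
    obtain ⟨y, rfl⟩ := (wordEquivOptimalPacking n).surjective T'
    simpa only [Equiv.symm_apply_apply, coe_wordEquivOptimalPacking] using
      card_symmDiff_functionGraph x y
end

section
/- Let n, d, m ≥ 1 be integers and let G_n be the directed graph with vertex set {s, t} ∪ {1,…,n} and edges (s,i) and (i,t) for each i ∈ {1,…,n}. Then there exist m pairwise distinct minimum st-cuts C_1, …, C_m of G_n with |C_a Δ C_b| ≥ 2d for all a ≠ b if and only if A_2(n, d) ≥ m. -/
open Finset

/-- Vertices of the graph `G n`: `Sum.inl i` is the vertex `i ∈ {1,…,n}`,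
`Sum.inr false` is the source `s`, and `Sum.inr true` is the sink `t`. -/
abbrev GVtx (n : ℕ) := Fin n ⊕ Bool

/-- The source vertex `s` of `G n`. -/
def gs (n : ℕ) : GVtx n := Sum.inr false

/-- The sink vertex `t` of `G n`. -/
def gt (n : ℕ) : GVtx n := Sum.inr true

/-- The edge set of `G n`: a directed edge `(s, i)` and a directed edge `(i, t)` for each
`i ∈ {1,…,n}`. -/
def gEdges (n : ℕ) : Finset (GVtx n × GVtx n) :=
  (Finset.univ.image fun i : Fin n => (gs n, Sum.inl i)) ∪
  (Finset.univ.image fun i : Fin n => (Sum.inl i, gt n))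

/-- An `st`-cut of `G n`: a subset `C` of the edges such that after deleting the edges of
`C` there is no directed path from `s` to `t`. -/
def IsStCut (n : ℕ) (C : Finset (GVtx n × GVtx n)) : Prop :=
  C ⊆ gEdges n ∧
  ¬ Relation.ReflTransGen (fun u v => (u, v) ∈ gEdges n ∧ (u, v) ∉ C) (gs n) (gt n)

/-- A minimum `st`-cut of `G n`: an `st`-cut of minimum cardinality. -/
def IsMinStCut (n : ℕ) (C : Finset (GVtx n × GVtx n)) : Prop :=
  IsStCut n C ∧ ∀ C' : Finset (GVtx n × GVtx n), IsStCut n C' → C.card ≤ C'.card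

/-- `A₂ n d`: the maximum number of binary codewords of length `n` in which every two
distinct codewords have Hamming distance at least `d`. -/
noncomputable def A2 (n d : ℕ) : ℕ :=
  sSup {m | ∃ C : Finset (Fin n → Bool), C.card = m ∧
    ∀ x ∈ C, ∀ y ∈ C, x ≠ y → d ≤ hammingDist x y}

/-!
Every path from `s` to `t` in `G n` has the form `s → i → t`, so an edge set is an `st`-cut exactly
when it contains at least one of the two edges at each `i`. The minimum cuts therefore choose
exactly one edge at each `i`: they are the graphs of the binary words of length `n`, seen as edge
sets. Two graphs of functions differ in two points for each argument at which the functions differ,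
so the symmetric difference of two minimum cuts has size twice the Hamming distance of their words.
-/

section FunctionGraph

variable {ι β : Type*} [Fintype ι] [DecidableEq ι] [DecidableEq β]

/-- The graph `{(i, f i)}` of a function with finite domain, as a finset, so that its cardinality
and symmetric differences can be counted. -/
def graphFinset (f : ι → β) : Finset (ι × β) :=
  univ.image fun i => (i, f i)

theorem mk_mem_graphFinset {f : ι → β} {i : ι} {b : β} : (i, b) ∈ graphFinset f ↔ f i = b := by
  simp [graphFinset]

theorem graphFinset_injective :
    Function.Injective (graphFinset : (ι → β) → Finset (ι × β)) := by
  intro f g hfg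
  funext i
  have hi : (i, g i) ∈ graphFinset f := hfg ▸ mk_mem_graphFinset.2 rfl
  exact mk_mem_graphFinset.1 hi

theorem card_graphFinset (f : ι → β) : #(graphFinset f) = Fintype.card ι :=
  card_image_of_injective _ fun _ _ h => congrArg Prod.fst h

theorem card_graphFinset_sdiff (f g : ι → β) :
    #(graphFinset f \ graphFinset g) = hammingDist f g := by
  have sdiff_eq_image :
      graphFinset f \ graphFinset g = ({i | f i ≠ g i} : Finset ι).image fun i => (i, f i) := by
    ext ⟨i, b⟩
    simp only [mem_sdiff, mk_mem_graphFinset, mem_image, mem_filter_univ, Prod.mk.injEq]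
    grind
  rw [sdiff_eq_image, card_image_of_injective _ fun _ _ h => congrArg Prod.fst h, hammingDist]

theorem card_symmDiff_graphFinset (f g : ι → β) :
    #(symmDiff (graphFinset f) (graphFinset g)) = 2 * hammingDist f g := by
  rw [symmDiff_def, sup_eq_union, card_union_of_disjoint disjoint_sdiff_sdiff,
    card_graphFinset_sdiff, card_graphFinset_sdiff, hammingDist_comm g f, two_mul]

end FunctionGraph

section Cuts

variable {n : ℕ}

/-- The edges of `G n` indexed by `Fin n × Bool`: `(i, true)` stands for the edge from `s` to `i`
and `(i, false)` for the edge from `i` to `t`. -/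
def gEdge (n : ℕ) : Fin n × Bool → GVtx n × GVtx n
  | (i, true) => (gs n, Sum.inl i)
  | (i, false) => (Sum.inl i, gt n)

theorem gEdge_injective : Function.Injective (gEdge n) := by
  rintro ⟨i, _ | _⟩ ⟨j, _ | _⟩ h <;> simp_all [gEdge, gs, gt]

theorem image_gEdge_univ : univ.image (gEdge n) = gEdges n := by
  ext e
  simp [gEdges, gEdge, or_comm, exists_or]

theorem gEdge_mem_gEdges (p : Fin n × Bool) : gEdge n p ∈ gEdges n :=
  image_gEdge_univ ▸ mem_image_of_mem _ (mem_univ p)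

theorem mk_gt_mem_gEdges_iff {u : GVtx n} :
    (u, gt n) ∈ gEdges n ↔ ∃ i, u = Sum.inl i := by
  simp [gEdges, gt, eq_comm]

theorem mk_inl_mem_gEdges_iff {u : GVtx n} {i : Fin n} :
    (u, Sum.inl i) ∈ gEdges n ↔ u = gs n := by
  simp [gEdges, gt, eq_comm]

theorem reflTransGen_gs_gt_iff {C : Finset (GVtx n × GVtx n)} :
    Relation.ReflTransGen (fun u v => (u, v) ∈ gEdges n ∧ (u, v) ∉ C) (gs n) (gt n) ↔
      ∃ i, ∀ b, gEdge n (i, b) ∉ C := by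
  constructor
  · intro path
    obtain h | ⟨u, path_to_u, edge_to_t, hut⟩ := path.cases_tail
    · simp [gs, gt] at h
    obtain ⟨i, rfl⟩ := mk_gt_mem_gEdges_iff.1 edge_to_t
    obtain h | ⟨v, -, edge_to_i, hvi⟩ := path_to_u.cases_tail
    · simp [gs] at h
    obtain rfl := mk_inl_mem_gEdges_iff.1 edge_to_i
    exact ⟨i, Bool.forall_bool.2 ⟨hut, hvi⟩⟩
  · rintro ⟨i, hi⟩
    exact .tail (.single ⟨gEdge_mem_gEdges (i, true), hi true⟩)
      ⟨gEdge_mem_gEdges (i, false), hi false⟩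

/-- The edge set of `G n` that contains, at each `i`, the edge selected by the `i`-th letter of the
binary word `x`: the edge from `s` to `i` if the letter is `true`, the edge from `i` to `t`
otherwise. -/
def wordCut (x : Fin n → Bool) : Finset (GVtx n × GVtx n) :=
  (graphFinset x).image (gEdge n)

theorem wordCut_injective : Function.Injective (wordCut : (Fin n → Bool) → _) :=
  (image_injective gEdge_injective).comp graphFinset_injective

theorem card_wordCut (x : Fin n → Bool) : #(wordCut x) = n := by
  rw [wordCut, card_image_of_injective _ gEdge_injective, card_graphFinset, Fintype.card_fin]

theorem card_symmDiff_wordCut (x y : Fin n → Bool) :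
    #(symmDiff (wordCut x) (wordCut y)) = 2 * hammingDist x y := by
  rw [wordCut, wordCut, ← image_symmDiff _ _ gEdge_injective,
    card_image_of_injective _ gEdge_injective, card_symmDiff_graphFinset]

theorem wordCut_subset_gEdges (x : Fin n → Bool) : wordCut x ⊆ gEdges n :=
  image_gEdge_univ ▸ image_subset_image (subset_univ _)

theorem wordCut_subset_iff {x : Fin n → Bool} {C : Finset (GVtx n × GVtx n)} :
    wordCut x ⊆ C ↔ ∀ i, gEdge n (i, x i) ∈ C := by
  simp [wordCut, graphFinset, subset_iff]

theorem isStCut_iff_exists_wordCut_subset {C : Finset (GVtx n × GVtx n)} :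
    IsStCut n C ↔ C ⊆ gEdges n ∧ ∃ x, wordCut x ⊆ C := by
  simp only [IsStCut, reflTransGen_gs_gt_iff, wordCut_subset_iff]
  push Not
  rw [Classical.skolem]

theorem isStCut_wordCut (x : Fin n → Bool) : IsStCut n (wordCut x) :=
  isStCut_iff_exists_wordCut_subset.2 ⟨wordCut_subset_gEdges x, x, Subset.rfl⟩

theorem isMinStCut_iff_exists_wordCut_eq {C : Finset (GVtx n × GVtx n)} :
    IsMinStCut n C ↔ ∃ x, wordCut x = C := by
  constructor
  · rintro ⟨cut, minimal⟩
    obtain ⟨-, x, hx⟩ := isStCut_iff_exists_wordCut_subset.1 cut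
    exact ⟨x, eq_of_subset_of_card_le hx (minimal _ (isStCut_wordCut x))⟩
  · rintro ⟨x, rfl⟩
    refine ⟨isStCut_wordCut x, fun C' cut' => ?_⟩
    obtain ⟨-, y, hy⟩ := isStCut_iff_exists_wordCut_subset.1 cut'
    calc #(wordCut x) = #(wordCut y) := by rw [card_wordCut, card_wordCut]
      _ ≤ #C' := card_le_card hy

end Cuts

section Codes

variable {n d : ℕ}

/-- The binary codes of length `n` and minimum distance at least `d`, whose largest cardinality is
`A2 n d`. -/
def IsBinaryCode (d : ℕ) (C : Finset (Fin n → Bool)) : Prop :=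
  ∀ x ∈ C, ∀ y ∈ C, x ≠ y → d ≤ hammingDist x y

theorem bddAbove_card_isBinaryCode (n d : ℕ) :
    BddAbove {m | ∃ C : Finset (Fin n → Bool), #C = m ∧ IsBinaryCode d C} := by
  refine ⟨Fintype.card (Fin n → Bool), ?_⟩
  rintro _ ⟨C, rfl, -⟩
  exact card_le_univ C

theorem IsBinaryCode.card_le_A2 {C : Finset (Fin n → Bool)} (hC : IsBinaryCode d C) :
    #C ≤ A2 n d :=
  le_csSup (bddAbove_card_isBinaryCode n d) ⟨C, rfl, hC⟩

theorem exists_isBinaryCode_card_eq_A2 (n d : ℕ) :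
    ∃ C : Finset (Fin n → Bool), #C = A2 n d ∧ IsBinaryCode d C := by
  refine Nat.sSup_mem ?_ (bddAbove_card_isBinaryCode n d)
  exact ⟨0, ∅, card_empty, by simp [IsBinaryCode]⟩

theorem le_A2_iff {m : ℕ} :
    m ≤ A2 n d ↔ ∃ x : Fin m → Fin n → Bool,
      Function.Injective x ∧ ∀ a b, a ≠ b → d ≤ hammingDist (x a) (x b) := by
  constructor
  · intro hm
    obtain ⟨C, card_C, hC⟩ := exists_isBinaryCode_card_eq_A2 n d
    obtain ⟨x⟩ : Nonempty (Fin m ↪ C) :=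
      Function.Embedding.nonempty_of_card_le (by simpa [card_C] using hm)
    have x_injective : Function.Injective fun a => (x a : Fin n → Bool) :=
      Subtype.val_injective.comp x.injective
    exact ⟨_, x_injective, fun a b hab => hC _ (x a).2 _ (x b).2 (x_injective.ne hab)⟩
  · rintro ⟨x, x_injective, hx⟩
    have card_image_x : #(univ.image x) = m := by
      rw [card_image_of_injective _ x_injective, card_univ, Fintype.card_fin]
    rw [← card_image_x]
    apply IsBinaryCode.card_le_A2
    simp only [IsBinaryCode, forall_mem_image]
    exact fun a _ b _ hab => hx a b (ne_of_apply_ne x hab)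

end Codes

/-- There exist `m` pairwise distinct minimum `st`-cuts of `G n` with pairwise symmetric
difference at least `2d` if and only if `A₂(n, d) ≥ m`. -/
theorem diverse_min_cuts_iff_code (n d m : ℕ) (hn : 1 ≤ n) (hd : 1 ≤ d) (hm : 1 ≤ m) :
    (∃ C : Fin m → Finset (GVtx n × GVtx n),
      Function.Injective C ∧
      (∀ a : Fin m, IsMinStCut n (C a)) ∧
      (∀ a b : Fin m, a ≠ b → 2 * d ≤ (symmDiff (C a) (C b)).card)) ↔
    m ≤ A2 n d := by
  simp only [le_A2_iff, isMinStCut_iff_exists_wordCut_eq]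
  constructor
  · rintro ⟨C, C_injective, C_min, C_diverse⟩
    choose x hx using C_min
    obtain rfl : wordCut ∘ x = C := funext hx
    refine ⟨x, C_injective.of_comp, fun a b hab => ?_⟩
    have two_mul_le := C_diverse a b hab
    rw [Function.comp_apply, Function.comp_apply, card_symmDiff_wordCut] at two_mul_le
    exact Nat.le_of_mul_le_mul_left two_mul_le two_pos
  · rintro ⟨x, x_injective, hx⟩
    refine ⟨wordCut ∘ x, wordCut_injective.comp x_injective, fun a => ⟨x a, rfl⟩,
      fun a b hab => ?_⟩
    rw [Function.comp_apply, Function.comp_apply, card_symmDiff_wordCut]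
    exact Nat.mul_le_mul_left 2 (hx a b hab)
end
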